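/- arXiv:2102.06497 — 2 statements merged into one kernel-verified Lean document; each statement's English description precedes it below -/
import Mathlib

section
/- Let 3/2 < q < ∞, p = 2q/(2q−3), and 1 ≤ p* < p. Let g : (−1,0) → [0,∞) be measurable with g ∈ L^{p,1}(−1,0). Then Σ_{k=0}^{∞} r_k^{2 − 2/p* − 3/q} (∫_{−r_k²}^{0} g(s)^{p*} ds)^{1/p*} ≤ C ‖g‖_{L^{p,1}(−1,0)}, where r_k = 2^{−k} and C depends only on p, p*, q. -/
open MeasureTheory ENNReal

noncomputable section

/-- The Lorentz norm `‖g‖_{L^{p,1}(−1,0)}` of a nonnegative function on `(−1,0)`: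
`‖g‖_{p,1} = p ∫₀^∞ |{s ∈ (−1,0) : g(s) > t}|^{1/p} dt`. -/
def lorentzNorm1 (g : ℝ → ℝ) (p : ℝ) : ℝ≥0∞ :=
  ENNReal.ofReal p * ∫⁻ t in Set.Ioi (0 : ℝ),
    ((volume.restrict (Set.Ioo (-1 : ℝ) 0)) {s : ℝ | t < g s}) ^ (1 / p)

lemma aux_layer (μ : Measure ℝ) (g : ℝ → ℝ) (hg : Measurable g) (h0 : ∀ s, 0 ≤ g s) (r : ℝ)
    (hr : 1 ≤ r) (hfin : ∫⁻ s, ENNReal.ofReal (g s ^ r) ∂μ ≠ ⊤) :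
    (∫⁻ s, ENNReal.ofReal (g s ^ r) ∂μ) ^ (1 / r) ≤
      ∫⁻ t in Set.Ioi (0 : ℝ), (μ {s : ℝ | t < g s}) ^ (1 / r) := by
  have hr0 : 0 < r := by linarith
  set X := ∫⁻ s, ENNReal.ofReal (g s ^ r) ∂μ with hX
  have hinv : 1 / r ≤ 1 := by rw [div_le_one hr0]; exact hr
  by_cases hX0 : X = 0
  · rw [hX0, ENNReal.zero_rpow_of_pos (by positivity)]; exact zero_le
  set h : ℝ → ℝ≥0∞ := fun s => (ENNReal.ofReal (g s ^ r)) ^ (1 - 1 / r) with hh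
  have hGm : Measurable fun s => ENNReal.ofReal (g s ^ r) :=
    ENNReal.measurable_ofReal.comp (hg.pow_const r)
  have hhm : Measurable h := hGm.pow_const _
  have key : X ≤ (∫⁻ t in Set.Ioi (0 : ℝ), (μ {s : ℝ | t < g s}) ^ (1 / r)) * X ^ (1 - 1 / r) := by
    have e1 : X = ∫⁻ s, ENNReal.ofReal (g s) ∂(μ.withDensity h) := by
      rw [lintegral_withDensity_eq_lintegral_mul _ hhm hg.ennreal_ofReal, hX]
      refine lintegral_congr fun s => ?_
      simp only [hh, Pi.mul_apply, Function.comp]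
      rw [ENNReal.ofReal_rpow_of_nonneg (Real.rpow_nonneg (h0 s) _) (by linarith),
        ← Real.rpow_mul (h0 s), ← ENNReal.ofReal_mul (Real.rpow_nonneg (h0 s) _)]
      congr 1
      have : r * (1 - 1 / r) = r - 1 := by field_simp
      rw [this]
      rcases (h0 s).eq_or_lt with hs | hs
      · rw [← hs, Real.zero_rpow hr0.ne', mul_zero]
      · rw [← Real.rpow_add_one hs.ne']; congr 1; ring
    rw [lintegral_eq_lintegral_meas_lt _ (Filter.Eventually.of_forall h0) hg.aemeasurable] at e1
    refine e1.le.trans ?_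
    rw [← lintegral_mul_const']
    · refine lintegral_mono fun t => ?_
      have hA : MeasurableSet {s : ℝ | t < g s} := measurableSet_lt measurable_const hg
      simp only
      rw [withDensity_apply _ hA]
      have := ENNReal.lintegral_mul_norm_pow_le (μ := μ.restrict {s : ℝ | t < g s})
        (f := fun _ => 1) (g := fun s => ENNReal.ofReal (g s ^ r)) aemeasurable_const
        hGm.aemeasurable (p := 1 / r) (q := 1 - 1 / r) (by positivity) (by linarith) (by ring)
      simp only [ENNReal.one_rpow, one_mul, lintegral_const, Measure.restrict_apply_univ] at this
      refine this.trans ?_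
      gcongr
      exact setLIntegral_le_lintegral _ _
    · exact ENNReal.rpow_ne_top_of_nonneg (by linarith) hfin
  have e2 : X = X ^ (1 / r) * X ^ (1 - 1 / r) := by
    rw [← ENNReal.rpow_add _ _ hX0 hfin]; simp
  refine (ENNReal.mul_le_mul_iff_left ?_ ?_).1 (e2.ge.trans key)
  · exact (ENNReal.rpow_pos (pos_iff_ne_zero.2 hX0) hfin).ne'
  · exact ENNReal.rpow_ne_top_of_nonneg (by linarith) hfin

lemma aux_low (a b m : ℝ) (hb : 0 < b) (hab : b < a) (hm : 0 < m) (j k : ℕ) (hk : k ≤ j)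
    (hmj : m ≤ (1 / 4 : ℝ) ^ j) :
    ((1 / 4 : ℝ) ^ k) ^ (b - a) * (min m ((1 / 4 : ℝ) ^ k)) ^ a ≤
      m ^ b * ((1 / 4 : ℝ) ^ (a - b)) ^ (j - k) := by
  obtain ⟨i, rfl⟩ := Nat.exists_eq_add_of_le hk
  have hx : (0 : ℝ) < (1 / 4 : ℝ) ^ k := by positivity
  have h1 : (min m ((1 / 4 : ℝ) ^ k)) ^ a ≤ m ^ a :=
    Real.rpow_le_rpow (by positivity) (min_le_left _ _) (by linarith)
  have h2 : m ^ a = m ^ b * m ^ (a - b) := by rw [← Real.rpow_add hm]; congr 1; ring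
  have h3 : m ^ (a - b) ≤ (((1 / 4 : ℝ) ^ k) * (1 / 4) ^ i) ^ (a - b) :=
    Real.rpow_le_rpow hm.le (by rw [← pow_add]; exact hmj) (by linarith)
  rw [Real.mul_rpow hx.le (by positivity)] at h3
  have h4 : ((1 / 4 : ℝ) ^ k) ^ (b - a) * ((1 / 4 : ℝ) ^ k) ^ (a - b) = 1 := by
    rw [← Real.rpow_add hx]; simp
  have h5 : (((1 / 4 : ℝ)) ^ i) ^ (a - b) = ((1 / 4 : ℝ) ^ (a - b)) ^ i := by
    rw [← Real.rpow_natCast, ← Real.rpow_mul (by norm_num), mul_comm, Real.rpow_mul (by norm_num),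
      Real.rpow_natCast]
  rw [Nat.add_sub_cancel_left, ← h5]
  calc _ ≤ ((1 / 4 : ℝ) ^ k) ^ (b - a) * (m ^ b * (((1 / 4 : ℝ) ^ k) ^ (a - b) *
        (((1 / 4 : ℝ)) ^ i) ^ (a - b))) := by
        gcongr
        refine h1.trans ?_
        rw [h2]; gcongr
    _ = (((1 / 4 : ℝ) ^ k) ^ (b - a) * ((1 / 4 : ℝ) ^ k) ^ (a - b)) *
        (m ^ b * (((1 / 4 : ℝ)) ^ i) ^ (a - b)) := by ring
    _ = _ := by rw [h4, one_mul]

lemma aux_high (a b m : ℝ) (hb : 0 < b) (hab : b < a) (hm : 0 < m) (j i : ℕ)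
    (hmj : (1 / 4 : ℝ) ^ (j + 1) < m) :
    ((1 / 4 : ℝ) ^ (i + (j + 1))) ^ (b - a) * (min m ((1 / 4 : ℝ) ^ (i + (j + 1)))) ^ a ≤
      m ^ b * ((1 / 4 : ℝ) ^ b) ^ i := by
  have hx : (0 : ℝ) < (1 / 4 : ℝ) ^ (i + (j + 1)) := by positivity
  have h1 : (min m ((1 / 4 : ℝ) ^ (i + (j + 1)))) ^ a ≤ ((1 / 4 : ℝ) ^ (i + (j + 1))) ^ a :=
    Real.rpow_le_rpow (by positivity) (min_le_right _ _) (by linarith)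
  have h5 : ((1 / 4 : ℝ) ^ b) ^ i = (((1 / 4 : ℝ)) ^ i) ^ b := by
    symm
    rw [← Real.rpow_natCast, ← Real.rpow_mul (by norm_num), mul_comm, Real.rpow_mul (by norm_num),
      Real.rpow_natCast]
  calc _ ≤ ((1 / 4 : ℝ) ^ (i + (j + 1))) ^ (b - a) * ((1 / 4 : ℝ) ^ (i + (j + 1))) ^ a := by
        gcongr
    _ = ((1 / 4 : ℝ) ^ (i + (j + 1))) ^ b := by rw [← Real.rpow_add hx]; congr 1; ring
    _ = ((1 / 4 : ℝ) ^ i) ^ b * ((1 / 4 : ℝ) ^ (j + 1)) ^ b := by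
        rw [pow_add, Real.mul_rpow (by positivity) (by positivity)]
    _ ≤ ((1 / 4 : ℝ) ^ i) ^ b * m ^ b := by gcongr
    _ = _ := by rw [h5, mul_comm]

lemma aux_sum (a b : ℝ) (hb : 0 < b) (hab : b < a) (m : ℝ) (hm : 0 ≤ m) (hm1 : m ≤ 1) :
    ∑' k : ℕ, ENNReal.ofReal (((1 / 4 : ℝ) ^ k) ^ (b - a) * (min m ((1 / 4 : ℝ) ^ k)) ^ a) ≤
      ((1 - ENNReal.ofReal ((1 / 4 : ℝ) ^ (a - b)))⁻¹ + (1 - ENNReal.ofReal ((1 / 4 : ℝ) ^ b))⁻¹) *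
        ENNReal.ofReal (m ^ b) := by
  rcases hm.eq_or_lt with h | hm
  · subst h
    have : ∀ k : ℕ, min (0 : ℝ) ((1 / 4 : ℝ) ^ k) = 0 := fun k => min_eq_left (by positivity)
    simp [this, Real.zero_rpow (show a ≠ 0 by linarith)]
  obtain ⟨j, hj1, hj2⟩ := exists_nat_pow_near_of_lt_one (y := (1 / 4 : ℝ)) hm hm1
    (by norm_num) (by norm_num)
  rw [← Summable.sum_add_tsum_nat_add' (k := j + 1) ENNReal.summable, add_mul]
  gcongr
  · rw [← ENNReal.tsum_geometric, ← Finset.sum_range_reflect, ← ENNReal.tsum_mul_right]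
    refine le_trans ?_ (ENNReal.sum_le_tsum (Finset.range (j + 1)))
    refine Finset.sum_le_sum fun i hi => ?_
    have hi' : i ≤ j := by simpa [Nat.lt_succ_iff] using hi
    rw [← ENNReal.ofReal_pow (by positivity), ← ENNReal.ofReal_mul (by positivity)]
    refine ENNReal.ofReal_le_ofReal ?_
    have := aux_low a b m hb hab hm j (j + 1 - 1 - i) (by omega) hj2
    rw [show j - (j + 1 - 1 - i) = i by omega] at this
    rw [mul_comm _ (m ^ b)]; exact this
  · rw [← ENNReal.tsum_geometric, ← ENNReal.tsum_mul_right]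
    refine ENNReal.tsum_le_tsum fun i => ?_
    rw [← ENNReal.ofReal_pow (by positivity), ← ENNReal.ofReal_mul (by positivity)]
    refine ENNReal.ofReal_le_ofReal ?_
    rw [mul_comm _ (m ^ b)]
    exact aux_high a b m hb hab hm j i hj1

/-- Lemma A.5 (scalar form): for `3/2 < q < ∞`, `p = 2q/(2q−3)`, `1 ≤ p* < p`,
and `g ∈ L^{p,1}(−1,0)` nonnegative,
`Σ_{k} r_k^{2−2/p*−3/q} (∫_{−r_k²}^0 g^{p*})^{1/p*} ≤ C ‖g‖_{L^{p,1}(−1,0)}`. -/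
theorem stmt4 (q p pstar : ℝ) (hq : 3 / 2 < q) (hp : p = 2 * q / (2 * q - 3))
    (hp1 : 1 ≤ pstar) (hp2 : pstar < p) :
    ∃ C : ℝ≥0∞, 0 < C ∧ C ≠ ⊤ ∧
      ∀ g : ℝ → ℝ, Measurable g → (∀ s, 0 ≤ g s) →
        (∑' k : ℕ, ENNReal.ofReal
            (((2 : ℝ) ^ (-(k : ℝ))) ^ (2 - 2 / pstar - 3 / q) *
              (∫ s in Set.Ioo (-(((2 : ℝ) ^ (-(k : ℝ))) ^ 2)) 0, g s ^ pstar) ^ (1 / pstar)))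
          ≤ C * lorentzNorm1 g p := by
  have hps : 0 < pstar := by linarith
  have hp0 : 0 < p := by linarith
  have hb : 0 < 1 / p := by positivity
  have hab : 1 / p < 1 / pstar := one_div_lt_one_div_of_lt hps hp2
  have hgeo : ∀ c : ℝ, 0 < c → (1 - ENNReal.ofReal ((1 / 4 : ℝ) ^ c))⁻¹ ≠ ⊤ := by
    intro c hc
    rw [ENNReal.inv_ne_top]
    refine (tsub_pos_of_lt ?_).ne'
    rw [ENNReal.ofReal_lt_one]
    exact Real.rpow_lt_one (by norm_num) (by norm_num) hc
  refine ⟨(1 - ENNReal.ofReal ((1 / 4 : ℝ) ^ (1 / pstar - 1 / p)))⁻¹ +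
    (1 - ENNReal.ofReal ((1 / 4 : ℝ) ^ (1 / p)))⁻¹, ?_, ?_, ?_⟩
  · refine lt_of_lt_of_le ?_ le_self_add
    rw [ENNReal.inv_pos]
    exact ne_top_of_le_ne_top ENNReal.one_ne_top tsub_le_self
  · exact ENNReal.add_ne_top.2 ⟨hgeo _ (by linarith), hgeo _ hb⟩
  intro g hg h0
  set K := (1 - ENNReal.ofReal ((1 / 4 : ℝ) ^ (1 / pstar - 1 / p)))⁻¹ +
    (1 - ENNReal.ofReal ((1 / 4 : ℝ) ^ (1 / p)))⁻¹ with hK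
  have hr2 : ∀ k : ℕ, ((2 : ℝ) ^ (-(k : ℝ))) ^ 2 = (1 / 4 : ℝ) ^ k := by
    intro k
    rw [Real.rpow_neg (by norm_num), Real.rpow_natCast, ← inv_pow, ← pow_mul, mul_comm, pow_mul]
    norm_num
  have hexp : 2 - 2 / pstar - 3 / q = 2 * (1 / p - 1 / pstar) := by
    have : 2 * q - 3 ≠ 0 := by linarith
    have : q ≠ 0 := by linarith
    rw [hp]; field_simp; ring
  have hre : ∀ k : ℕ, ((2 : ℝ) ^ (-(k : ℝ))) ^ (2 - 2 / pstar - 3 / q) =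
      ((1 / 4 : ℝ) ^ k) ^ (1 / p - 1 / pstar) := by
    intro k
    rw [hexp, Real.rpow_mul (by positivity), ← hr2 k]
    norm_num
  have hx1 : ∀ k : ℕ, (1 / 4 : ℝ) ^ k ≤ 1 := fun k => pow_le_one₀ (by norm_num) (by norm_num)
  simp only [hre, hr2]
  set F : ℕ → ℝ → ℝ≥0∞ := fun k t =>
    (volume.restrict (Set.Ioo (-((1 / 4 : ℝ) ^ k)) 0)) {s : ℝ | t < g s} with hF
  set G : ℝ → ℝ≥0∞ := fun t => (volume.restrict (Set.Ioo (-1 : ℝ) 0)) {s : ℝ | t < g s} with hG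
  have hFm : ∀ k, Measurable (F k) := fun k =>
    Antitone.measurable fun s t hst => measure_mono fun x hx => lt_of_le_of_lt hst hx
  have step1 : ∀ k : ℕ, ENNReal.ofReal (((1 / 4 : ℝ) ^ k) ^ (1 / p - 1 / pstar) *
      (∫ s in Set.Ioo (-((1 / 4 : ℝ) ^ k)) 0, g s ^ pstar) ^ (1 / pstar)) ≤
      ∫⁻ t in Set.Ioi (0 : ℝ), ENNReal.ofReal (((1 / 4 : ℝ) ^ k) ^ (1 / p - 1 / pstar)) *
        F k t ^ (1 / pstar) := by
    intro k
    rw [lintegral_const_mul _ ((hFm k).pow_const _), ENNReal.ofReal_mul (by positivity)]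
    gcongr
    have hnn : ∀ s, 0 ≤ g s ^ pstar := fun s => Real.rpow_nonneg (h0 s) _
    have hms : Measurable fun s => g s ^ pstar := hg.pow_const _
    by_cases hfin : ∫⁻ s in Set.Ioo (-((1 / 4 : ℝ) ^ k)) 0, ENNReal.ofReal (g s ^ pstar) = ⊤
    · rw [integral_eq_lintegral_of_nonneg_ae (Filter.Eventually.of_forall hnn)
        hms.aestronglyMeasurable, hfin, ENNReal.toReal_top, Real.zero_rpow (by positivity)]
      simp
    · refine le_trans (le_of_eq ?_) (aux_layer _ g hg h0 pstar hp1 hfin)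
      rw [integral_eq_lintegral_of_nonneg_ae (Filter.Eventually.of_forall hnn)
        hms.aestronglyMeasurable, ← ENNReal.ofReal_rpow_of_nonneg ENNReal.toReal_nonneg
        (by positivity), ENNReal.ofReal_toReal hfin]
  refine (ENNReal.tsum_le_tsum step1).trans ?_
  rw [← lintegral_tsum fun k => (((hFm k).pow_const _).const_mul _).aemeasurable]
  have step2 : ∀ t, ∑' k : ℕ, ENNReal.ofReal (((1 / 4 : ℝ) ^ k) ^ (1 / p - 1 / pstar)) *
        F k t ^ (1 / pstar) ≤ K * G t ^ (1 / p) := by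
    intro t
    have hG1 : G t ≤ 1 := by
      refine (measure_mono (Set.subset_univ _)).trans ?_
      simp
    have hGt : G t ≠ ⊤ := ne_top_of_le_ne_top ENNReal.one_ne_top hG1
    have hGe : G t = ENNReal.ofReal (G t).toReal := (ENNReal.ofReal_toReal hGt).symm
    have := aux_sum (1 / pstar) (1 / p) hb hab (G t).toReal ENNReal.toReal_nonneg
      (ENNReal.toReal_le_of_le_ofReal zero_le_one (by simpa using hG1))
    rw [← ENNReal.ofReal_rpow_of_nonneg ENNReal.toReal_nonneg hb.le, ← hGe] at this
    refine le_trans (ENNReal.tsum_le_tsum fun k => ?_) this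
    rw [ENNReal.ofReal_mul (by positivity)]
    gcongr
    rw [← ENNReal.ofReal_rpow_of_nonneg (by positivity) (by positivity)]
    gcongr
    rw [ENNReal.ofReal_min, ← hGe]
    refine le_min ?_ ?_
    · refine Measure.restrict_mono (Set.Ioo_subset_Ioo_left ?_) le_rfl _
      linarith [hx1 k]
    · refine (measure_mono (Set.subset_univ _)).trans ?_
      simp
  refine (lintegral_mono step2).trans ?_
  have hGm : Measurable G :=
    Antitone.measurable fun s t hst => measure_mono fun x hx => lt_of_le_of_lt hst hx
  rw [lintegral_const_mul _ (hGm.pow_const _)]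
  gcongr
  unfold lorentzNorm1
  refine le_mul_of_one_le_left zero_le ?_
  rw [ENNReal.one_le_ofReal]
  linarith
end
end

section
/- Let R ≥ 1/2 and r_n = 2^{−n}, and suppose u ∈ L^∞(−r_n², 0; L²(U_n(R))) ∩ L²(−r_n², 0; W^{1,2}(U_n(R))), where U_n(R) = B'(R) × (−r_n, r_n). Then for 2 ≤ p ≤ ∞, 2 ≤ q_h, q_v < ∞ with 2/p + 2/q_h + 1/q_v = 3/2, one has ‖u‖_{L^p(−r_n², 0; L^{q_v}_v L^{q_h}_h(U_n(R)))}² ≤ C E_n(R), where E_n(R) = sup_{t∈(−r_n²,0)} ∫_{U_n(R)} |u(t)|² dx + ∫_{−r_n²}^{0} ∫_{U_n(R)} |∇u|² dx ds and C is independent of n. -/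
open MeasureTheory Metric ENNReal

noncomputable section

/-- The real-valued anisotropic norm `‖u‖_{L^{q_v}_v L^{q_h}_h(B'(R)×(−r,r))}`
for finite exponents. -/
def aniNormR (u : EuclideanSpace ℝ (Fin 2) × ℝ → ℝ) (R r qv qh : ℝ) : ℝ :=
  (∫ x3 in Set.Ioo (-r) r,
      (∫ x' in ball (0 : EuclideanSpace ℝ (Fin 2)) R, |u (x', x3)| ^ qh) ^ (qv / qh)) ^ (1 / qv)

/-- The cylinder `U_n(R) = B'(R) × (−r_n, r_n)`. -/
def cylSet (R r : ℝ) : Set (EuclideanSpace ℝ (Fin 2) × ℝ) :=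
  (ball (0 : EuclideanSpace ℝ (Fin 2)) R) ×ˢ Set.Ioo (-r) r

/-- The localized energy
`E_n(R) = sup_{t∈(−r_n²,0)} ∫_{U_n(R)} |u(t)|² dx + ∫_{−r_n²}^0 ∫_{U_n(R)} |∇u|² dx ds`. -/
def energy (u : ℝ → EuclideanSpace ℝ (Fin 2) × ℝ → ℝ) (R rn : ℝ) : ℝ≥0∞ :=
  (⨆ t ∈ Set.Ioo (-rn ^ 2) (0 : ℝ),
      ∫⁻ x in cylSet R rn, ENNReal.ofReal (|u t x| ^ 2)) +
    ∫⁻ s in Set.Ioo (-rn ^ 2) (0 : ℝ),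
      ∫⁻ x in cylSet R rn, ENNReal.ofReal (‖fderiv ℝ (u s) x‖ ^ 2)

lemma rpow_pred_mul_self (a : ℝ≥0∞) {s : ℝ} (hs : 1 ≤ s) : a ^ (s - 1) * a = a ^ s := by
  have := ENNReal.rpow_add_of_nonneg (x := a) (s - 1) 1 (by linarith) zero_le_one
  rw [ENNReal.rpow_one] at this
  rw [← this]; congr 1; ring

lemma one_dim {φ : ℝ → ℝ} (hφ : ContDiff ℝ 1 φ) {s : ℝ} (hs : 1 < s) {α β ℓ : ℝ} (hℓ : 0 < ℓ)
    (hab : ℓ ≤ β - α) {x : ℝ} (hx : x ∈ Set.Ioo α β) :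
    ‖φ x‖ₑ ^ s ≤ ∫⁻ t in Set.Ioo α β, ‖φ t‖ₑ ^ (s - 1) *
      (ENNReal.ofReal (1 / ℓ) * ‖φ t‖ₑ + ENNReal.ofReal s * ‖deriv φ t‖ₑ) := by
  set ψ : ℝ → ℝ := fun t => |φ t| ^ s with hψ
  have hψC : ContDiff ℝ 1 ψ := by
    have := hφ.norm_rpow hs
    simpa [hψ, Real.norm_eq_abs] using this
  have hψe : ∀ t, ‖ψ t‖ₑ = ‖φ t‖ₑ ^ s := by
    intro t
    simp only [hψ]
    rw [← Real.norm_eq_abs, Real.enorm_of_nonneg (by positivity), ← ofReal_norm,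
      ENNReal.ofReal_rpow_of_nonneg (norm_nonneg _) (by linarith)]
  have hφe : ∀ t, ‖|φ t|‖ₑ = ‖φ t‖ₑ := fun t => by rw [← Real.norm_eq_abs, enorm_norm]
  have hder : ∀ t, ‖deriv ψ t‖ₑ ≤ ‖φ t‖ₑ ^ (s - 1) * (ENNReal.ofReal s * ‖deriv φ t‖ₑ) := by
    intro t
    have h1 : HasDerivAt ψ (s * |φ t| ^ (s - 2) * φ t * deriv φ t) t :=
      (hasDerivAt_abs_rpow (φ t) hs).comp t ((hφ.differentiable (by simp)) t).hasDerivAt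
    rw [h1.deriv]
    have h2 : |s * |φ t| ^ (s - 2) * φ t * deriv φ t| = |φ t| ^ (s - 1) * (s * |deriv φ t|) := by
      rw [abs_mul, abs_mul, abs_mul, abs_of_pos (by linarith : 0 < s),
        abs_of_nonneg (by positivity : 0 ≤ |φ t| ^ (s - 2))]
      rcases eq_or_ne (φ t) 0 with h0 | h0
      · simp [h0, Real.zero_rpow (by linarith : s - 1 ≠ 0)]
      · have : |φ t| ^ (s - 1) = |φ t| ^ (s - 2) * |φ t| := by
          rw [← Real.rpow_add_one (by simpa using h0)]; congr 1; ring
        rw [this]; ring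
    rw [← ofReal_norm, Real.norm_eq_abs, h2, ENNReal.ofReal_mul (by positivity),
      ENNReal.ofReal_mul (by linarith), ← ENNReal.ofReal_rpow_of_nonneg (abs_nonneg _) (by linarith),
      ← Real.norm_eq_abs, ofReal_norm, ← Real.norm_eq_abs, ofReal_norm]
  have hdm : Measurable fun t => ‖deriv ψ t‖ₑ :=
    (hψC.continuous_deriv (by simp)).enorm.measurable
  set T := ∫⁻ t in Set.Ioo α β, ‖deriv ψ t‖ₑ with hT
  have key : ∀ y ∈ Set.Ioo α β, ‖ψ x‖ₑ ≤ ‖ψ y‖ₑ + T := by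
    intro y hy
    have h3 : ‖ψ x - ψ y‖ₑ ≤ T := by
      rcases le_total x y with h | h
      · rw [← enorm_neg, neg_sub]
        refine (enorm_sub_le_lintegral_deriv_of_contDiffOn_Icc hψC.contDiffOn h).trans ?_
        exact lintegral_mono_set (fun z hz => ⟨hx.1.trans_le hz.1, hz.2.trans_lt hy.2⟩)
      · refine (enorm_sub_le_lintegral_deriv_of_contDiffOn_Icc hψC.contDiffOn h).trans ?_
        exact lintegral_mono_set (fun z hz => ⟨hy.1.trans_le hz.1, hz.2.trans_lt hx.2⟩)
    calc ‖ψ x‖ₑ = ‖ψ y + (ψ x - ψ y)‖ₑ := by congr 1; ring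
      _ ≤ ‖ψ y‖ₑ + ‖ψ x - ψ y‖ₑ := enorm_add_le _ _
      _ ≤ _ := by gcongr
  have hav : ENNReal.ofReal (β - α) * ‖ψ x‖ₑ ≤
      (∫⁻ y in Set.Ioo α β, ‖ψ y‖ₑ) + ENNReal.ofReal (β - α) * T := by
    have := setLIntegral_mono' (μ := volume) measurableSet_Ioo key
    rw [lintegral_add_right _ measurable_const] at this
    simpa [mul_comm] using this
  have hba : 0 < β - α := by linarith
  have hne : ENNReal.ofReal (β - α) ≠ 0 := by simpa using hba
  have h4 : ‖ψ x‖ₑ ≤ ENNReal.ofReal (1 / ℓ) * (∫⁻ y in Set.Ioo α β, ‖ψ y‖ₑ) + T := by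
    have h5 : ‖ψ x‖ₑ ≤ (ENNReal.ofReal (β - α))⁻¹ * (∫⁻ y in Set.Ioo α β, ‖ψ y‖ₑ) + T := by
      calc ‖ψ x‖ₑ = (ENNReal.ofReal (β - α))⁻¹ * (ENNReal.ofReal (β - α) * ‖ψ x‖ₑ) := by
            rw [← mul_assoc, ENNReal.inv_mul_cancel hne ofReal_ne_top, one_mul]
        _ ≤ (ENNReal.ofReal (β - α))⁻¹ * ((∫⁻ y in Set.Ioo α β, ‖ψ y‖ₑ) +
            ENNReal.ofReal (β - α) * T) := by gcongr
        _ = _ := by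
            rw [mul_add, ← mul_assoc _ _ T, ENNReal.inv_mul_cancel hne ofReal_ne_top, one_mul]
    refine h5.trans ?_
    gcongr
    rw [← ENNReal.ofReal_inv_of_pos hba]
    apply ENNReal.ofReal_le_ofReal
    rw [one_div]; gcongr
  rw [← hψe]
  refine h4.trans ?_
  rw [hT, ← lintegral_const_mul _ hψC.continuous.enorm.measurable, ← lintegral_add_right _ hdm]
  apply lintegral_mono
  intro t
  simp only [mul_add]
  refine add_le_add ?_ (hder t)
  rw [hψe, mul_left_comm, rpow_pred_mul_self _ hs.le]

/-- planar Loomis-Whitney type bound -/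
lemma planar_aux {R s : ℝ} (hR : 0 < R) (hs : 1 < s) {h : ℝ × ℝ → ℝ} {Γ : ℝ × ℝ → ℝ≥0∞}
    (hh : ContDiff ℝ 1 h) (hΓ : Measurable Γ)
    (h1 : ∀ a b, ‖deriv (fun t => h (t, b)) a‖ₑ ≤ Γ (a, b))
    (h2 : ∀ a b, ‖deriv (fun t => h (a, t)) b‖ₑ ≤ Γ (a, b)) :
    ∫⁻ z in {z : ℝ × ℝ | z.1 ^ 2 + z.2 ^ 2 < R ^ 2 ∧ |z.1| ≤ 24 / 25 * R ∧ |z.2| ≤ 24 / 25 * R},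
      ‖h z‖ₑ ^ (2 * s) ≤
    (∫⁻ z in {z : ℝ × ℝ | z.1 ^ 2 + z.2 ^ 2 < R ^ 2}, ‖h z‖ₑ ^ (s - 1) *
      (ENNReal.ofReal (1 / (R / 2)) * ‖h z‖ₑ + ENNReal.ofReal s * Γ z)) ^ 2 := by
  set Q : Set (ℝ × ℝ) := {z : ℝ × ℝ | z.1 ^ 2 + z.2 ^ 2 < R ^ 2} with hQ
  set Q' : Set (ℝ × ℝ) :=
    {z : ℝ × ℝ | z.1 ^ 2 + z.2 ^ 2 < R ^ 2 ∧ |z.1| ≤ 24 / 25 * R ∧ |z.2| ≤ 24 / 25 * R} with hQ'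
  have hQm : MeasurableSet Q := measurableSet_lt (by fun_prop) (by fun_prop)
  have hQ'm : MeasurableSet Q' := by
    refine hQm.inter (MeasurableSet.inter ?_ ?_)
    · exact measurableSet_le (f := fun z : ℝ × ℝ => |z.1|) (by fun_prop) measurable_const
    · exact measurableSet_le (f := fun z : ℝ × ℝ => |z.2|) (by fun_prop) measurable_const
  set P : ℝ × ℝ → ℝ≥0∞ := fun z => ‖h z‖ₑ ^ (s - 1) *
      (ENNReal.ofReal (1 / (R / 2)) * ‖h z‖ₑ + ENNReal.ofReal s * Γ z) with hP
  have hhm : Measurable fun z => ‖h z‖ₑ := hh.continuous.enorm.measurable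
  have hPm : Measurable P := by fun_prop
  have hPi : Measurable (Q.indicator P) := hPm.indicator hQm
  set F1 : ℝ → ℝ≥0∞ := fun b => ∫⁻ t, Q.indicator P (t, b)
  set F2 : ℝ → ℝ≥0∞ := fun a => ∫⁻ t, Q.indicator P (a, t)
  have hF1 : Measurable F1 := hPi.lintegral_prod_left'
  have hF2 : Measurable F2 := hPi.lintegral_prod_right'
  have slice : ∀ y : ℝ, |y| ≤ 24 / 25 * R → R / 2 ≤ √(R ^ 2 - y ^ 2) - (-√(R ^ 2 - y ^ 2)) := by
    intro y hy
    have h3 : R / 4 ≤ √(R ^ 2 - y ^ 2) := by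
      apply Real.le_sqrt_of_sq_le
      have := sq_le_sq' (by linarith [abs_nonneg y] : -(24 / 25 * R) ≤ |y|) hy
      rw [sq_abs] at this
      nlinarith
    linarith
  have sl : ∀ x y : ℝ, x ^ 2 + y ^ 2 < R ^ 2 ↔
      x ∈ Set.Ioo (-√(R ^ 2 - y ^ 2)) (√(R ^ 2 - y ^ 2)) := by
    intro x y
    rw [Set.mem_Ioo, ← abs_lt, Real.lt_sqrt (abs_nonneg _), sq_abs]
    constructor <;> intro <;> linarith
  have b1 : ∀ z ∈ Q', ‖h z‖ₑ ^ s ≤ F1 z.2 := by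
    rintro ⟨a, b⟩ ⟨hz, ha, hb⟩
    have hc : ContDiff ℝ 1 (fun t => h (t, b)) := hh.comp (by fun_prop)
    refine (one_dim hc hs (by positivity) (slice b hb) ((sl a b).1 hz)).trans ?_
    rw [← lintegral_indicator measurableSet_Ioo]
    apply lintegral_mono
    intro t
    show _ ≤ Q.indicator P (t, b)
    by_cases ht : (t, b) ∈ Q
    · rw [Set.indicator_of_mem ht, Set.indicator_of_mem ((sl t b).1 ht)]
      simp only [hP]
      gcongr
      exact h1 t b
    · rw [Set.indicator_of_notMem (fun h => ht ((sl t b).2 h))]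
      exact zero_le
  have b2 : ∀ z ∈ Q', ‖h z‖ₑ ^ s ≤ F2 z.1 := by
    rintro ⟨a, b⟩ ⟨hz, ha, hb⟩
    have hc : ContDiff ℝ 1 (fun t => h (a, t)) := hh.comp (by fun_prop)
    refine (one_dim hc hs (by positivity) (slice a ha) ((sl b a).1 (by simpa [add_comm] using hz))).trans ?_
    rw [← lintegral_indicator measurableSet_Ioo]
    apply lintegral_mono
    intro t
    show _ ≤ Q.indicator P (a, t)
    by_cases ht : (a, t) ∈ Q
    · rw [Set.indicator_of_mem ht, Set.indicator_of_mem ((sl t a).1 (by simpa [hQ, add_comm] using ht))]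
      simp only [hP]
      gcongr
      exact h2 a t
    · rw [Set.indicator_of_notMem (fun h => ht (by have := (sl t a).2 h; simpa [hQ, add_comm] using this))]
      exact zero_le
  calc ∫⁻ z in Q', ‖h z‖ₑ ^ (2 * s) ≤ ∫⁻ z : ℝ × ℝ in Q', F2 z.1 * F1 z.2 := by
        apply setLIntegral_mono' hQ'm
        intro z hz
        rw [two_mul, ENNReal.rpow_add_of_nonneg _ _ (by linarith) (by linarith)]
        exact mul_le_mul' (b2 z hz) (b1 z hz)
    _ ≤ ∫⁻ z : ℝ × ℝ, F2 z.1 * F1 z.2 := setLIntegral_le_lintegral _ _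
    _ = (∫⁻ a, F2 a) * ∫⁻ b, F1 b := by
        rw [Measure.volume_eq_prod]
        exact lintegral_prod_mul hF2.aemeasurable hF1.aemeasurable
    _ = (∫⁻ z in Q, P z) ^ 2 := by
        rw [← lintegral_indicator hQm, Measure.volume_eq_prod, pow_two]
        congr 1
        · exact (lintegral_prod _ hPi.aemeasurable).symm
        · exact (lintegral_prod_symm _ hPi.aemeasurable).symm

local notation "E2" => EuclideanSpace ℝ (Fin 2)

lemma planar_L {R s : ℝ} (hR : 0 < R) (hs : 1 < s) {g : E2 → ℝ} {Γ : E2 → ℝ≥0∞}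
    (hg : ContDiff ℝ 1 g) (hΓ : Measurable Γ) (hgΓ : ∀ x, ‖fderiv ℝ g x‖ₑ ≤ Γ x)
    (L : ℂ ≃ₗᵢ[ℝ] E2) :
    ∫⁻ x in {x : E2 | ‖x‖ < R ∧ |(L.symm x).re| ≤ 24 / 25 * R ∧ |(L.symm x).im| ≤ 24 / 25 * R},
      ‖g x‖ₑ ^ (2 * s) ≤
    (∫⁻ x in ball (0 : E2) R, ‖g x‖ₑ ^ (s - 1) *
      (ENNReal.ofReal (1 / (R / 2)) * ‖g x‖ₑ + ENNReal.ofReal s * Γ x)) ^ 2 := by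
  set Φ : ℝ × ℝ → E2 := fun z => L (Complex.measurableEquivRealProd.symm z) with hΦ
  have hmp : MeasurePreserving Φ volume volume :=
    L.measurePreserving.comp Complex.volume_preserving_equiv_real_prod.symm
  have hemb : MeasurableEmbedding Φ :=
    L.toMeasurableEquiv.measurableEmbedding.comp
      Complex.measurableEquivRealProd.symm.measurableEmbedding
  have hΦe : ∀ z, Φ z = L (z.1 + z.2 * Complex.I) := fun z => by
    simp only [hΦ]; congr 1
    apply Complex.ext <;> simp [Complex.measurableEquivRealProd]
  have hΦC : ContDiff ℝ 1 Φ := by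
    have : Φ = fun z => L (Complex.ofRealCLM z.1 + Complex.ofRealCLM z.2 * Complex.I) := by
      ext1 z; rw [hΦe]; rfl
    rw [this]
    fun_prop
  have hn : ∀ z, (‖Φ z‖ < R ↔ z.1 ^ 2 + z.2 ^ 2 < R ^ 2) := by
    intro z
    rw [hΦe, L.norm_map, ← sq_lt_sq₀ (norm_nonneg _) hR.le, Complex.sq_norm,
      Complex.normSq_add_mul_I]
  have hre : ∀ z, (L.symm (Φ z)).re = z.1 := by intro z; rw [hΦe]; simp
  have him : ∀ z, (L.symm (Φ z)).im = z.2 := by intro z; rw [hΦe]; simp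
  have hd : ∀ (e : E2) (he : ‖e‖ = 1) (c : ℝ → E2) (t : ℝ), HasDerivAt c e t →
      ‖deriv (fun t => g (c t)) t‖ₑ ≤ Γ (c t) := by
    intro e he c t hc
    refine le_trans ?_ (hgΓ _)
    have := ((hg.differentiable (by simp)) (c t)).hasFDerivAt.comp_hasDerivAt t hc
    rw [show deriv (fun t => g (c t)) t = fderiv ℝ g (c t) e from this.deriv]
    refine (ContinuousLinearMap.le_opENorm _ _).trans ?_
    rw [← ofReal_norm e, he]; simp
  have main := planar_aux hR hs (h := g ∘ Φ) (Γ := Γ ∘ Φ) (hg.comp hΦC) (hΓ.comp hmp.measurable)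
    (by
      intro a b
      refine hd (L 1) (by simp) (fun t => Φ (t, b)) a ?_
      have : (fun t : ℝ => Φ (t, b)) = fun t : ℝ => t • L 1 + Φ (0, b) := by
        ext1 t
        rw [hΦe, hΦe, ← map_smul, ← map_add]; simp
      rw [this]
      simpa using ((hasDerivAt_id a).smul_const (L 1)).add_const (Φ (0, b)))
    (by
      intro a b
      refine hd (L Complex.I) (by simp) (fun t => Φ (a, t)) b ?_
      have : (fun t : ℝ => Φ (a, t)) = fun t : ℝ => t • L Complex.I + Φ (a, 0) := by
        ext1 t
        rw [hΦe, hΦe, ← map_smul, ← map_add]; simp [add_comm]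
      rw [this]
      simpa using ((hasDerivAt_id b).smul_const (L Complex.I)).add_const (Φ (a, 0)))
  have e1 := hmp.setLIntegral_comp_preimage_emb hemb (fun x => ‖g x‖ₑ ^ (2 * s))
    {x : E2 | ‖x‖ < R ∧ |(L.symm x).re| ≤ 24 / 25 * R ∧ |(L.symm x).im| ≤ 24 / 25 * R}
  have e2 := hmp.setLIntegral_comp_preimage_emb hemb (fun x => ‖g x‖ₑ ^ (s - 1) *
      (ENNReal.ofReal (1 / (R / 2)) * ‖g x‖ₑ + ENNReal.ofReal s * Γ x)) (ball (0 : E2) R)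
  rw [← e1, ← e2]
  have s1 : Φ ⁻¹' {x : E2 | ‖x‖ < R ∧ |(L.symm x).re| ≤ 24 / 25 * R ∧
      |(L.symm x).im| ≤ 24 / 25 * R} = {z : ℝ × ℝ | z.1 ^ 2 + z.2 ^ 2 < R ^ 2 ∧
      |z.1| ≤ 24 / 25 * R ∧ |z.2| ≤ 24 / 25 * R} := by
    ext z
    simp only [Set.mem_preimage, Set.mem_ofPred_eq, hn, hre, him]
  have s2 : Φ ⁻¹' (ball (0 : E2) R) = {z : ℝ × ℝ | z.1 ^ 2 + z.2 ^ 2 < R ^ 2} := by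
    ext z
    simp only [Set.mem_preimage, Set.mem_ofPred_eq, mem_ball_zero_iff, hn]
  rw [s1, s2]
  exact main

lemma planar_ball {R s : ℝ} (hR : 0 < R) (hs : 1 < s) {g : E2 → ℝ} {Γ : E2 → ℝ≥0∞}
    (hg : ContDiff ℝ 1 g) (hΓ : Measurable Γ) (hgΓ : ∀ x, ‖fderiv ℝ g x‖ₑ ≤ Γ x) :
    ∫⁻ x in ball (0 : E2) R, ‖g x‖ₑ ^ (2 * s) ≤
    2 * (∫⁻ x in ball (0 : E2) R, ‖g x‖ₑ ^ (s - 1) *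
      (ENNReal.ofReal (1 / (R / 2)) * ‖g x‖ₑ + ENNReal.ofReal s * Γ x)) ^ 2 := by
  let L1 : ℂ ≃ₗᵢ[ℝ] E2 := Complex.orthonormalBasisOneI.repr
  let c : Circle := ⟨(20 / 29 : ℝ) + (21 / 29 : ℝ) * Complex.I, by
    rw [← SetLike.mem_coe, Submonoid.coe_unitSphere, mem_sphere_zero_iff_norm, ← sq_eq_sq₀ (norm_nonneg _) zero_le_one, Complex.sq_norm,
      Complex.normSq_add_mul_I]; norm_num⟩
  let L2 : ℂ ≃ₗᵢ[ℝ] E2 := (rotation c).trans L1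
  rw [two_mul (_ ^ 2)]
  refine le_trans ?_ (add_le_add (planar_L hR hs hg hΓ hgΓ L1) (planar_L hR hs hg hΓ hgΓ L2))
  refine le_trans (lintegral_mono_set ?_) (lintegral_union_le _ _ _)
  intro x hx
  have hx' : ‖x‖ < R := by simpa using hx
  by_contra hcon
  simp only [Set.mem_union, Set.mem_ofPred_eq, hx', true_and, not_or, not_and_or, not_le] at hcon
  obtain ⟨k1, k2⟩ := hcon
  set w := L2.symm x with hw
  have hz : L1.symm x = c * w := by
    have : x = L2 w := by simp [hw]
    rw [this]
    simp [L2]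
  have hwn : w.re ^ 2 + w.im ^ 2 < R ^ 2 := by
    have : ‖w‖ < R := by rw [hw, L2.symm.norm_map]; exact hx'
    rw [← sq_lt_sq₀ (norm_nonneg _) hR.le, Complex.sq_norm, Complex.normSq_apply] at this
    linarith
  rw [hz] at k1
  simp only [c, Complex.mul_re, Complex.mul_im, Complex.add_re, Complex.add_im, Complex.ofReal_re,
    Complex.ofReal_im, Complex.I_re, Complex.I_im] at k1
  ring_nf at k1
  generalize w.re = a at *
  generalize w.im = b at *
  have aR : |a| ≤ R := abs_le_of_sq_le_sq (by nlinarith [sq_nonneg b]) hR.le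
  have bR : |b| ≤ R := abs_le_of_sq_le_sq (by nlinarith [sq_nonneg a]) hR.le
  have q1 : ∀ t v : ℝ, t ^ 2 + v ^ 2 < R ^ 2 → 24 / 25 * R < |t| → |v| ≤ 7 / 25 * R := by
    intro t v htv ht
    have : (24 / 25 * R) ^ 2 < t ^ 2 := by
      rw [← sq_abs t]; exact pow_lt_pow_left₀ ht (by positivity) (by norm_num)
    exact abs_le_of_sq_le_sq (by nlinarith) (by positivity)
  rcases k2 with k2 | k2
  · have := q1 a b hwn k2
    rw [abs_le] at aR this
    rcases k1 with k1 | k1 <;> rw [lt_abs] at k1 <;> rcases k1 with k1 | k1 <;> linarith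
  · have := q1 b a (by linarith) k2
    rw [abs_le] at bR this
    rcases k1 with k1 | k1 <;> rw [lt_abs] at k1 <;> rcases k1 with k1 | k1 <;> linarith

lemma lyap {α : Type*} [MeasurableSpace α] {μ : Measure α} {w : α → ℝ≥0∞} (hw : Measurable w)
    {a b τ q : ℝ} (ha : 0 ≤ a) (hb : 0 ≤ b) (h0 : 0 ≤ τ) (h1 : τ ≤ 1)
    (hq : q = (1 - τ) * a + τ * b) :
    ∫⁻ x, w x ^ q ∂μ ≤ (∫⁻ x, w x ^ a ∂μ) ^ (1 - τ) * (∫⁻ x, w x ^ b ∂μ) ^ τ := by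
  refine le_trans (le_of_eq ?_) (ENNReal.lintegral_mul_norm_pow_le (hw.pow_const a).aemeasurable
    (hw.pow_const b).aemeasurable (by linarith : 0 ≤ 1 - τ) h0 (by ring))
  congr 1
  ext x
  rw [← ENNReal.rpow_mul, ← ENNReal.rpow_mul, ← ENNReal.rpow_add_of_nonneg, hq]
  · congr 1; ring
  · exact mul_nonneg ha (by linarith)
  · positivity

lemma cauchy {α : Type*} [MeasurableSpace α] {μ : Measure α} {a b : α → ℝ≥0∞}
    (ha : Measurable a) (hb : Measurable b) :
    (∫⁻ x, a x * b x ∂μ) ^ 2 ≤ (∫⁻ x, a x ^ 2 ∂μ) * ∫⁻ x, b x ^ 2 ∂μ := by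
  have h := ENNReal.lintegral_mul_norm_pow_le (μ := μ) (ha.pow_const 2).aemeasurable
    (hb.pow_const 2).aemeasurable (by norm_num : (0:ℝ) ≤ 1 / 2) (by norm_num : (0:ℝ) ≤ 1 / 2)
    (by norm_num)
  have e : ∀ c : ℝ≥0∞, (c ^ 2) ^ (1 / 2 : ℝ) = c := fun c => by
    rw [← ENNReal.rpow_natCast, ← ENNReal.rpow_mul]; norm_num
  have e' : ∀ c : ℝ≥0∞, (c ^ (1 / 2 : ℝ)) ^ 2 = c := fun c => by
    rw [← ENNReal.rpow_natCast, ← ENNReal.rpow_mul]; norm_num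
  simp only [e] at h
  calc _ ≤ _ := pow_le_pow_left' h 2
    _ = _ := by rw [mul_pow, e', e']

lemma ennreal_add_sq_le (a b : ℝ≥0∞) : (a + b) ^ 2 ≤ 2 * (a ^ 2 + b ^ 2) := by
  have := ENNReal.rpow_add_le_mul_rpow_add_rpow a b (p := 2) (by norm_num)
  norm_num at this
  exact_mod_cast this

lemma rpow_pred_sq (a : ℝ≥0∞) (s : ℝ) : (a ^ (s - 1)) ^ 2 = a ^ (2 * s - 2) := by
  rw [← ENNReal.rpow_natCast, ← ENNReal.rpow_mul]; congr 1; push_cast; ring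

lemma planar_step {R s : ℝ} (hR : 0 < R) (hs : 1 < s) :
    ∃ C : ℝ≥0∞, C ≠ ⊤ ∧ ∀ (g : E2 → ℝ) (Γ : E2 → ℝ≥0∞), ContDiff ℝ 1 g → Measurable Γ →
      (∀ x, ‖fderiv ℝ g x‖ₑ ≤ Γ x) →
    ∫⁻ x in ball (0 : E2) R, ‖g x‖ₑ ^ (2 * s) ≤
      C * (∫⁻ x in ball (0 : E2) R, ‖g x‖ₑ ^ (2 * s - 2)) *
        ∫⁻ x in ball (0 : E2) R, (Γ x ^ 2 + ‖g x‖ₑ ^ 2) := by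
  set k := ENNReal.ofReal (1 / (R / 2)) with hk
  set σ := ENNReal.ofReal s with hσ
  refine ⟨2 * (2 * (k ^ 2 + σ ^ 2)), ?_, ?_⟩
  · finiteness
  intro g Γ hg hΓ hgΓ
  have hgm : Measurable fun z => ‖g z‖ₑ := hg.continuous.enorm.measurable
  refine (planar_ball hR hs hg hΓ hgΓ).trans ?_
  rw [mul_assoc 2, mul_assoc 2]
  gcongr
  refine (cauchy (by fun_prop) (by fun_prop)).trans ?_
  simp only [rpow_pred_sq]
  rw [mul_comm (2 * (k ^ 2 + σ ^ 2)), mul_assoc]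
  gcongr
  rw [← lintegral_const_mul _ (by fun_prop)]
  apply lintegral_mono
  intro x
  refine (ennreal_add_sq_le _ _).trans ?_
  dsimp only
  rw [mul_assoc]
  gcongr
  rw [mul_pow, mul_pow, add_comm, mul_add, add_mul, add_mul]
  refine add_le_add le_add_self ?_
  exact le_self_add

lemma planar_GN {R m q : ℝ} (hR : 0 < R) (hm : 2 ≤ m) (hq : m ≤ q) :
    ∃ C : ℝ≥0∞, C ≠ ⊤ ∧ ∀ (g : E2 → ℝ) (Γ : E2 → ℝ≥0∞), ContDiff ℝ 1 g → Measurable Γ →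
      (∀ x, ‖fderiv ℝ g x‖ₑ ≤ Γ x) →
    ∫⁻ x in ball (0 : E2) R, ‖g x‖ₑ ^ q ≤
      C * (∫⁻ x in ball (0 : E2) R, ‖g x‖ₑ ^ m) *
        (∫⁻ x in ball (0 : E2) R, (Γ x ^ 2 + ‖g x‖ₑ ^ 2)) ^ ((q - m) / 2) := by
  have ind : ∀ k : ℕ, ∃ C : ℝ≥0∞, C ≠ ⊤ ∧ ∀ (g : E2 → ℝ) (Γ : E2 → ℝ≥0∞), ContDiff ℝ 1 g →
      Measurable Γ → (∀ x, ‖fderiv ℝ g x‖ₑ ≤ Γ x) →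
      ∫⁻ x in ball (0 : E2) R, ‖g x‖ₑ ^ (m + 2 * k) ≤
      C * (∫⁻ x in ball (0 : E2) R, ‖g x‖ₑ ^ m) *
        (∫⁻ x in ball (0 : E2) R, (Γ x ^ 2 + ‖g x‖ₑ ^ 2)) ^ k := by
    intro k
    induction k with
    | zero => exact ⟨1, by simp, by intros; simp⟩
    | succ k ih =>
      obtain ⟨C, hC, h⟩ := ih
      obtain ⟨C', hC', h'⟩ := planar_step (R := R) (s := (m + 2 * (k + 1)) / 2) hR (by
        have : (0:ℝ) ≤ k := by positivity
        linarith)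
      refine ⟨C' * C, by finiteness, ?_⟩
      intro g Γ hg hΓ hgΓ
      have i1 := h g Γ hg hΓ hgΓ
      have i2 := h' g Γ hg hΓ hgΓ
      rw [show 2 * ((m + 2 * ((k:ℝ) + 1)) / 2) - 2 = m + 2 * k by ring,
        show 2 * ((m + 2 * ((k:ℝ) + 1)) / 2) = m + 2 * (k + 1) by ring] at i2
      push_cast
      refine i2.trans ?_
      calc _ ≤ C' * (C * (∫⁻ x in ball (0 : E2) R, ‖g x‖ₑ ^ m) *
        (∫⁻ x in ball (0 : E2) R, (Γ x ^ 2 + ‖g x‖ₑ ^ 2)) ^ k) *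
          (∫⁻ x in ball (0 : E2) R, (Γ x ^ 2 + ‖g x‖ₑ ^ 2)) := by gcongr
        _ = _ := by ring
  obtain ⟨k, hk⟩ := exists_nat_ge ((q - m) / 2)
  set K : ℕ := k + 1
  have hK : (q - m) / 2 ≤ K := by simp only [K]; push_cast; linarith
  have hK0 : (0:ℝ) < K := by simp only [K]; push_cast; positivity
  obtain ⟨C, hC, h⟩ := ind K
  set τ := (q - m) / (2 * K) with hτ
  have ht0 : 0 ≤ τ := div_nonneg (by linarith) (by positivity)
  have ht1 : τ ≤ 1 := by rw [hτ, div_le_one (by positivity)]; linarith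
  refine ⟨C ^ τ, by finiteness, ?_⟩
  intro g Γ hg hΓ hgΓ
  have hgm : Measurable fun z => ‖g z‖ₑ := hg.continuous.enorm.measurable
  have hl := lyap (μ := volume.restrict (ball (0 : E2) R)) hgm (a := m) (b := m + 2 * K)
    (q := q) (τ := τ) (by linarith) (by positivity) ht0 ht1 (by
      rw [hτ]; field_simp; ring)
  refine hl.trans ?_
  calc _ ≤ (∫⁻ x in ball (0 : E2) R, ‖g x‖ₑ ^ m) ^ (1 - τ) * (C * (∫⁻ x in ball (0 : E2) R, ‖g x‖ₑ ^ m) *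
        (∫⁻ x in ball (0 : E2) R, (Γ x ^ 2 + ‖g x‖ₑ ^ 2)) ^ K) ^ τ := by
        gcongr; exact h g Γ hg hΓ hgΓ
    _ = _ := by
        rw [ENNReal.mul_rpow_of_nonneg _ _ ht0, ENNReal.mul_rpow_of_nonneg _ _ ht0,
          ← ENNReal.rpow_natCast, ← ENNReal.rpow_mul]
        have e1 : (∫⁻ x in ball (0 : E2) R, ‖g x‖ₑ ^ m) ^ (1 - τ) *
            (∫⁻ x in ball (0 : E2) R, ‖g x‖ₑ ^ m) ^ τ = ∫⁻ x in ball (0 : E2) R, ‖g x‖ₑ ^ m := by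
          rw [← ENNReal.rpow_add_of_nonneg _ _ (by linarith) ht0]; simp
        rw [show (K:ℝ) * τ = (q - m) / 2 by rw [hτ]; field_simp]
        rw [← mul_assoc, mul_left_comm, e1]

lemma vertical {R r s : ℝ} (hr : 0 < r) (hs : 1 < s) {f : E2 × ℝ → ℝ}
    (hf : ContDiff ℝ 1 f) {z : ℝ} (hz : z ∈ Set.Ioo (-r) r) :
    (∫⁻ x in ball (0 : E2) R, ‖f (x, z)‖ₑ ^ s) ^ 2 ≤
      2 * ENNReal.ofReal s ^ 2 *
      (∫⁻ y in (ball (0 : E2) R) ×ˢ Set.Ioo (-r) r, ‖f y‖ₑ ^ (2 * s - 2)) *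
      ∫⁻ y in (ball (0 : E2) R) ×ˢ Set.Ioo (-r) r,
        (‖fderiv ℝ f y‖ₑ ^ 2 + ENNReal.ofReal (1 / r) ^ 2 * ‖f y‖ₑ ^ 2) := by
  have hfm : Measurable fun y => ‖f y‖ₑ := hf.continuous.enorm.measurable
  have hdm : Measurable fun y => ‖fderiv ℝ f y‖ₑ :=
    (hf.continuous_fderiv (by simp)).enorm.measurable
  set k := ENNReal.ofReal (1 / r) with hk
  set σ := ENNReal.ofReal s with hσ
  have h1σ : 1 ≤ σ ^ 2 := one_le_pow₀ (by rw [hσ]; simpa using hs.le)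
  have key : ∫⁻ x in ball (0 : E2) R, ‖f (x, z)‖ₑ ^ s ≤
      ∫⁻ y in (ball (0 : E2) R) ×ˢ Set.Ioo (-r) r, ‖f y‖ₑ ^ (s - 1) *
        (k * ‖f y‖ₑ + σ * ‖fderiv ℝ f y‖ₑ) := by
    rw [Measure.volume_eq_prod, ← Measure.prod_restrict, lintegral_prod _ (by fun_prop)]
    apply lintegral_mono
    intro x
    have hc : ContDiff ℝ 1 (fun t => f (x, t)) := hf.comp (by fun_prop)
    refine (one_dim hc hs hr (by linarith) hz).trans ?_
    apply lintegral_mono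
    intro t
    dsimp only
    gcongr
    have hd : HasDerivAt (fun t : ℝ => (x, t)) ((0 : E2), (1 : ℝ)) t :=
      (hasDerivAt_const t x).prodMk (hasDerivAt_id t)
    have := ((hf.differentiable (by simp)) (x, t)).hasFDerivAt.comp_hasDerivAt t hd
    rw [show deriv (fun t => f (x, t)) t = fderiv ℝ f (x, t) (0, 1) from this.deriv]
    refine (ContinuousLinearMap.le_opENorm _ _).trans ?_
    rw [← ofReal_norm ((0 : E2), (1 : ℝ))]; simp [Prod.norm_def]
  refine (pow_le_pow_left' key 2).trans ?_
  refine (cauchy (by fun_prop) (by fun_prop)).trans ?_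
  simp only [rpow_pred_sq]
  rw [mul_comm (2 * σ ^ 2), mul_assoc]
  gcongr
  rw [← lintegral_const_mul _ (by fun_prop)]
  apply lintegral_mono
  intro x
  refine (ennreal_add_sq_le _ _).trans ?_
  dsimp only
  rw [mul_assoc]
  gcongr
  rw [mul_pow, mul_pow, add_comm, mul_add]
  exact add_le_add le_rfl (le_mul_of_one_le_left' h1σ)

/-- horizontal `q`-integral -/
def hInt (R : ℝ) (f : E2 × ℝ → ℝ) (q : ℝ) (z : ℝ) : ℝ≥0∞ :=
  ∫⁻ x in ball (0 : E2) R, ‖f (x, z)‖ₑ ^ q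

/-- horizontal `H¹` energy -/
def hEn (R : ℝ) (f : E2 × ℝ → ℝ) (z : ℝ) : ℝ≥0∞ :=
  ∫⁻ x in ball (0 : E2) R, (‖fderiv ℝ f (x, z)‖ₑ ^ 2 + ‖f (x, z)‖ₑ ^ 2)

def cA (R r : ℝ) (f : E2 × ℝ → ℝ) : ℝ≥0∞ :=
  ∫⁻ y in (ball (0 : E2) R) ×ˢ Set.Ioo (-r) r, ‖f y‖ₑ ^ 2

def cX (R r : ℝ) (f : E2 × ℝ → ℝ) : ℝ≥0∞ :=
  ∫⁻ y in (ball (0 : E2) R) ×ˢ Set.Ioo (-r) r,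
        (‖fderiv ℝ f y‖ₑ ^ 2 + ENNReal.ofReal (1 / r) ^ 2 * ‖f y‖ₑ ^ 2)

lemma meas_f {f : E2 × ℝ → ℝ} (hf : ContDiff ℝ 1 f) : Measurable fun y => ‖f y‖ₑ :=
  hf.continuous.enorm.measurable

lemma meas_df {f : E2 × ℝ → ℝ} (hf : ContDiff ℝ 1 f) : Measurable fun y => ‖fderiv ℝ f y‖ₑ :=
  (hf.continuous_fderiv (by simp)).enorm.measurable

lemma meas_hInt {R q : ℝ} {f : E2 × ℝ → ℝ} (hf : ContDiff ℝ 1 f) : Measurable (hInt R f q) :=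
  ((meas_f hf).pow_const q).lintegral_prod_left'

lemma meas_hEn {R : ℝ} {f : E2 × ℝ → ℝ} (hf : ContDiff ℝ 1 f) : Measurable (hEn R f) :=
  (((meas_df hf).pow_const 2).add ((meas_f hf).pow_const 2)).lintegral_prod_left'

lemma int_hInt {R r q : ℝ} {f : E2 × ℝ → ℝ} (hf : ContDiff ℝ 1 f) :
    ∫⁻ z in Set.Ioo (-r) r, hInt R f q z =
      ∫⁻ y in (ball (0 : E2) R) ×ˢ Set.Ioo (-r) r, ‖f y‖ₑ ^ q := by
  rw [Measure.volume_eq_prod, ← Measure.prod_restrict,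
    lintegral_prod_symm _ ((meas_f hf).pow_const q).aemeasurable]
  rfl

lemma int_hInt2 {R r : ℝ} {f : E2 × ℝ → ℝ} (hf : ContDiff ℝ 1 f) :
    ∫⁻ z in Set.Ioo (-r) r, hInt R f 2 z = cA R r f := by
  rw [int_hInt hf, cA]
  simp

lemma int_hEn {R r : ℝ} (hr : 0 < r) (hr1 : r ≤ 1) {f : E2 × ℝ → ℝ} (hf : ContDiff ℝ 1 f) :
    ∫⁻ z in Set.Ioo (-r) r, hEn R f z ≤ cX R r f := by
  have h1 : 1 ≤ ENNReal.ofReal (1 / r) ^ 2 := one_le_pow₀ (by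
    rw [ENNReal.one_le_ofReal, le_div_iff₀ hr]; linarith)
  have : ∫⁻ z in Set.Ioo (-r) r, hEn R f z = ∫⁻ y in (ball (0 : E2) R) ×ˢ Set.Ioo (-r) r,
      (‖fderiv ℝ f y‖ₑ ^ 2 + ‖f y‖ₑ ^ 2) := by
    rw [Measure.volume_eq_prod, ← Measure.prod_restrict]
    exact (lintegral_prod_symm _
      (((meas_df hf).pow_const 2).add ((meas_f hf).pow_const 2)).aemeasurable).symm
  rw [this, cX]
  apply lintegral_mono
  intro y
  dsimp only
  gcongr
  exact le_mul_of_one_le_left' h1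

lemma hInt_GN {R m q : ℝ} (hR : 0 < R) (hm : 2 ≤ m) (hq : m ≤ q) :
    ∃ C : ℝ≥0∞, C ≠ ⊤ ∧ ∀ (f : E2 × ℝ → ℝ), ContDiff ℝ 1 f → ∀ z,
      hInt R f q z ≤ C * hInt R f m z * hEn R f z ^ ((q - m) / 2) := by
  obtain ⟨C, hC, h⟩ := planar_GN hR hm hq
  refine ⟨C, hC, fun f hf z => ?_⟩
  refine h (fun x => f (x, z)) (fun x => ‖fderiv ℝ f (x, z)‖ₑ) (hf.comp (by fun_prop))
    ((meas_df hf).comp (by fun_prop)) ?_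
  intro x
  have hd : HasFDerivAt (fun x : E2 => (x, z)) (ContinuousLinearMap.inl ℝ E2 ℝ) x :=
    (hasFDerivAt_id x).prodMk (hasFDerivAt_const z x)
  have := ((hf.differentiable (by simp)) (x, z)).hasFDerivAt.comp x hd
  rw [show fderiv ℝ (fun x => f (x, z)) x =
    (fderiv ℝ f (x, z)).comp (ContinuousLinearMap.inl ℝ E2 ℝ) from this.fderiv]
  rw [← ofReal_norm, ← ofReal_norm]
  apply ENNReal.ofReal_le_ofReal
  refine (ContinuousLinearMap.opNorm_comp_le _ _).trans ?_
  have := ContinuousLinearMap.norm_inl_le_one ℝ E2 ℝ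
  exact mul_le_of_le_one_right (norm_nonneg _) this

lemma hInt_bdd {R r : ℝ} {f : E2 × ℝ → ℝ} (hf : ContDiff ℝ 1 f) {q : ℝ} (hq : 0 ≤ q) :
    ∃ M : ℝ≥0∞, M ≠ ⊤ ∧ ∀ z ∈ Set.Ioo (-r) r, hInt R f q z ≤ M := by
  obtain ⟨M, hM⟩ := ((isCompact_closedBall (0 : E2) R).prod
    (isCompact_Icc (a := -r) (b := r))).exists_bound_of_continuousOn hf.continuous.continuousOn
  refine ⟨ENNReal.ofReal M ^ q * volume (ball (0 : E2) R), ?_, ?_⟩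
  · have := measure_ball_lt_top (μ := volume) (x := (0 : E2)) (r := R)
    finiteness
  · intro z hz
    rw [hInt, ← setLIntegral_const]
    apply setLIntegral_mono' measurableSet_ball
    intro x hx
    gcongr
    rw [← ofReal_norm]
    exact ENNReal.ofReal_le_ofReal (hM (x, z) ⟨ball_subset_closedBall hx, hz.1.le, hz.2.le⟩)

lemma le_half_iff (a b : ℝ≥0∞) : a ≤ b ^ (1 / 2 : ℝ) ↔ a ^ 2 ≤ b := by
  rw [one_div, ENNReal.le_rpow_inv_iff (by norm_num)]
  norm_num

lemma sup_two {R r : ℝ} (hr : 0 < r) {f : E2 × ℝ → ℝ} (hf : ContDiff ℝ 1 f)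
    {z : ℝ} (hz : z ∈ Set.Ioo (-r) r) :
    hInt R f 2 z ≤ (8 * (cA R r f * cX R r f)) ^ (1 / 2 : ℝ) := by
  have h := vertical (R := R) hr (by norm_num : (1:ℝ) < 2) hf hz
  rw [le_half_iff]
  refine h.trans (le_of_eq ?_)
  rw [show (2 * (2:ℝ) - 2) = (2:ℕ) by norm_num]
  simp only [ENNReal.rpow_natCast]
  rw [show ENNReal.ofReal 2 = 2 by simp, cA, cX]
  ring

lemma sup_four {R : ℝ} (hR : 0 < R) : ∃ C : ℝ≥0∞, C ≠ ⊤ ∧ ∀ (r : ℝ), 0 < r → r ≤ 1 →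
    ∀ (f : E2 × ℝ → ℝ), ContDiff ℝ 1 f → ∀ z ∈ Set.Ioo (-r) r,
      hInt R f 4 z ≤ C * cX R r f ^ (2:ℝ) := by
  obtain ⟨C, hC, h⟩ := hInt_GN (m := 4) (q := 6) hR (by norm_num) (by norm_num)
  refine ⟨2 * ENNReal.ofReal 4 ^ 2 * C, by finiteness, ?_⟩
  intro r hr hr1 f hf
  set M := ⨆ z ∈ Set.Ioo (-r) r, hInt R f 4 z with hM
  have hMle : ∀ z ∈ Set.Ioo (-r) r, hInt R f 4 z ≤ M := fun z hz =>
    le_iSup₂_of_le z hz le_rfl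
  have hMtop : M ≠ ⊤ := by
    obtain ⟨M', h1, h2⟩ := hInt_bdd (R := R) (r := r) hf (q := 4) (by norm_num)
    exact ne_top_of_le_ne_top h1 (iSup₂_le h2)
  have h6 : ∫⁻ y in (ball (0 : E2) R) ×ˢ Set.Ioo (-r) r, ‖f y‖ₑ ^ (2 * (4:ℝ) - 2) ≤
      C * M * cX R r f := by
    rw [show (2 * (4:ℝ) - 2) = 6 by norm_num, ← int_hInt hf]
    calc ∫⁻ z in Set.Ioo (-r) r, hInt R f 6 z ≤ ∫⁻ z in Set.Ioo (-r) r, C * M * hEn R f z := by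
          apply setLIntegral_mono' measurableSet_Ioo
          intro z hz
          refine (h f hf z).trans ?_
          norm_num
          gcongr
          exact hMle z hz
      _ = C * M * ∫⁻ z in Set.Ioo (-r) r, hEn R f z := lintegral_const_mul _ (meas_hEn hf)
      _ ≤ _ := by gcongr; exact int_hEn hr hr1 hf
  have hsq : ∀ z ∈ Set.Ioo (-r) r, hInt R f 4 z ^ 2 ≤
      2 * ENNReal.ofReal 4 ^ 2 * C * cX R r f ^ (2:ℝ) * M := by
    intro z hz
    refine (vertical (R := R) hr (by norm_num : (1:ℝ) < 4) hf hz).trans ?_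
    calc _ ≤ 2 * ENNReal.ofReal 4 ^ 2 * (C * M * cX R r f) * cX R r f := by
          gcongr
          exact le_rfl
      _ = _ := by
          rw [show (2:ℝ) = ((2:ℕ):ℝ) by norm_num, ENNReal.rpow_natCast]
          ring
  have hMM : M ^ 2 ≤ 2 * ENNReal.ofReal 4 ^ 2 * C * cX R r f ^ (2:ℝ) * M := by
    have : M ≤ (2 * ENNReal.ofReal 4 ^ 2 * C * cX R r f ^ (2:ℝ) * M) ^ (1 / 2 : ℝ) := by
      refine iSup₂_le fun z hz => ?_
      rw [le_half_iff]
      exact hsq z hz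
    rwa [le_half_iff] at this
  intro z hz
  refine (hMle z hz).trans ?_
  rcases eq_or_ne M 0 with h0 | h0
  · rw [h0]; exact zero_le
  · rw [pow_two] at hMM
    exact (ENNReal.mul_le_mul_iff_left h0 hMtop).1 hMM

lemma core {R qh qv θ : ℝ} (hR : 0 < R) (hqh : 2 ≤ qh) (hqv : 2 ≤ qv) (h0 : 0 ≤ θ) (h1 : θ ≤ 1)
    (hθ : θ + 2 / qh + 1 / qv = 3 / 2) :
    ∃ C : ℝ≥0∞, C ≠ ⊤ ∧ ∀ (r : ℝ), 0 < r → r ≤ 1 → ∀ (f : E2 × ℝ → ℝ), ContDiff ℝ 1 f →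
      ∫⁻ z in Set.Ioo (-r) r, hInt R f qh z ^ (qv / qh) ≤
        C * cA R r f ^ (qv * ((1 - θ) / 2)) * cX R r f ^ (qv * (θ / 2)) := by
  have qh0 : 0 < qh := by linarith
  have qv0 : 0 < qv := by linarith
  have he1 : 0 ≤ qv / qh := by positivity
  set x := 2 / qh with hx
  set y := 2 / qv with hy
  have hy' : 1 / qv = y / 2 := by rw [hy]; field_simp
  rw [hy'] at hθ
  have hx0 : 0 < x := by positivity
  have hy0 : 0 < y := by positivity
  have hx1 : x ≤ 1 := by rw [hx, div_le_one qh0]; exact hqh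
  have hy1 : y ≤ 1 := by rw [hy, div_le_one qv0]; exact hqv
  have hxq : x * qh = 2 := by rw [hx]; field_simp
  have hyq : y * qv = 2 := by rw [hy]; field_simp
  have hee : qv / qh = qv * x / 2 := by rw [hx]; field_simp
  rcases le_or_gt 1 (x + y) with hc | hc
  · -- base exponent 2
    obtain ⟨C, hC, hGN⟩ := hInt_GN (m := 2) (q := qh) hR le_rfl hqh
    set e2 := (qh - 2) / 2 * (qv / qh) with he2
    have e2' : e2 = qv * (1 - x) / 2 := by
      rw [he2, hx]; field_simp
    have e20 : 0 ≤ e2 := by rw [e2']; have : 0 ≤ 1 - x := by linarith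
                            positivity
    have e21 : e2 ≤ 1 := by rw [e2']; nlinarith
    have hv1 : 0 ≤ qv / 2 - 1 := by linarith
    refine ⟨C ^ (qv / qh) * (8 : ℝ≥0∞) ^ (1 / 2 * (qv / 2 - 1)), by finiteness, ?_⟩
    intro r hr hr1 f hf
    set A := cA R r f with hA
    set X := cX R r f with hX
    calc ∫⁻ z in Set.Ioo (-r) r, hInt R f qh z ^ (qv / qh)
        ≤ ∫⁻ z in Set.Ioo (-r) r, (C ^ (qv / qh) * ((8 * (A * X)) ^ (1 / 2 : ℝ)) ^ (qv / 2 - 1)) *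
            (hInt R f 2 z ^ (1 - e2) * hEn R f z ^ e2) := by
          apply setLIntegral_mono' measurableSet_Ioo
          intro z hz
          calc hInt R f qh z ^ (qv / qh)
              ≤ (C * hInt R f 2 z * hEn R f z ^ ((qh - 2) / 2)) ^ (qv / qh) := by
                gcongr; exact hGN f hf z
            _ = C ^ (qv / qh) * (hInt R f 2 z ^ (qv / 2 - 1) * hInt R f 2 z ^ (1 - e2)) *
                  hEn R f z ^ e2 := by
                rw [ENNReal.mul_rpow_of_nonneg _ _ he1, ENNReal.mul_rpow_of_nonneg _ _ he1,
                  ← ENNReal.rpow_mul, ← ENNReal.rpow_add_of_nonneg _ _ hv1 (by linarith)]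
                rw [show qv / 2 - 1 + (1 - e2) = qv / qh by rw [hee, e2']; ring]
            _ ≤ C ^ (qv / qh) * (((8 * (A * X)) ^ (1 / 2 : ℝ)) ^ (qv / 2 - 1) *
                  hInt R f 2 z ^ (1 - e2)) * hEn R f z ^ e2 := by
                gcongr; exact sup_two hr hf hz
            _ = _ := by ring
      _ = (C ^ (qv / qh) * ((8 * (A * X)) ^ (1 / 2 : ℝ)) ^ (qv / 2 - 1)) *
            ∫⁻ z in Set.Ioo (-r) r, hInt R f 2 z ^ (1 - e2) * hEn R f z ^ e2 :=
          lintegral_const_mul _ (((meas_hInt hf).pow_const _).mul ((meas_hEn hf).pow_const _))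
      _ ≤ (C ^ (qv / qh) * ((8 * (A * X)) ^ (1 / 2 : ℝ)) ^ (qv / 2 - 1)) *
            (A ^ (1 - e2) * X ^ e2) := by
          gcongr
          refine (ENNReal.lintegral_mul_norm_pow_le (meas_hInt hf).aemeasurable
            (meas_hEn hf).aemeasurable (by linarith) e20 (by ring)).trans ?_
          rw [int_hInt2 hf]
          gcongr
          exact int_hEn hr hr1 hf
      _ = _ := by
          have hh : 0 ≤ 1 / 2 * (qv / 2 - 1) := by positivity
          rw [← ENNReal.rpow_mul, ENNReal.mul_rpow_of_nonneg _ _ hh,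
            ENNReal.mul_rpow_of_nonneg _ _ hh,
            show qv * ((1 - θ) / 2) = 1 / 2 * (qv / 2 - 1) + (1 - e2) by
              rw [e2']; linear_combination (-qv / 2) * hθ + hyq / 4,
            show qv * (θ / 2) = 1 / 2 * (qv / 2 - 1) + e2 by
              rw [e2']; linear_combination (qv / 2) * hθ - hyq / 4,
            ENNReal.rpow_add_of_nonneg _ _ hh (by linarith),
            ENNReal.rpow_add_of_nonneg _ _ hh e20]
          ring
  · -- base exponent m
    set m := (1 - y) * qh with hm
    have hm2 : 2 ≤ m := by rw [hm]; nlinarith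
    have hm4 : m ≤ 4 := by
      have : 1 - y ≤ 2 * x := by linarith
      rw [hm]; nlinarith
    have hmq : m ≤ qh := by rw [hm]; nlinarith
    obtain ⟨C, hC, hGN⟩ := hInt_GN (m := m) (q := qh) hR hm2 hmq
    obtain ⟨C4, hC4, h4⟩ := sup_four hR
    have e2' : (qh - m) / 2 * (qv / qh) = 1 := by
      rw [hm, hy]; field_simp; ring
    set τ := (m - 2) / 2 with hτ
    have t0 : 0 ≤ τ := by rw [hτ]; linarith
    have t1 : 0 ≤ 1 - τ := by rw [hτ]; linarith
    set e := qv / qh with he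
    have ht1 : 0 ≤ 1 / 2 * (1 - τ) * e := by positivity
    refine ⟨C ^ e * ((8 : ℝ≥0∞) ^ (1 / 2 * (1 - τ) * e) * C4 ^ (τ * e)), by finiteness, ?_⟩
    intro r hr hr1 f hf
    set A := cA R r f with hA
    set X := cX R r f with hX
    set K := ((8 * (A * X)) ^ (1 / 2 : ℝ)) ^ (1 - τ) * (C4 * X ^ (2:ℝ)) ^ τ with hK
    have hKm : ∀ z ∈ Set.Ioo (-r) r, hInt R f m z ≤ K := by
      intro z hz
      have hl := lyap (μ := volume.restrict (ball (0 : E2) R)) (w := fun x => ‖f (x, z)‖ₑ)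
        ((meas_f hf).comp (by fun_prop)) (a := 2) (b := 4)
        (q := m) (τ := τ) (by norm_num) (by norm_num) t0 (by linarith) (by rw [hτ]; ring)
      refine hl.trans ?_
      rw [hK]
      gcongr
      · exact sup_two hr hf hz
      · exact h4 r hr hr1 f hf z hz
    calc ∫⁻ z in Set.Ioo (-r) r, hInt R f qh z ^ e
        ≤ ∫⁻ z in Set.Ioo (-r) r, C ^ e * K ^ e * hEn R f z := by
          apply setLIntegral_mono' measurableSet_Ioo
          intro z hz
          calc hInt R f qh z ^ e
              ≤ (C * K * hEn R f z ^ ((qh - m) / 2)) ^ e := by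
                gcongr
                refine (hGN f hf z).trans ?_
                gcongr
                exact hKm z hz
            _ = _ := by
                rw [ENNReal.mul_rpow_of_nonneg _ _ he1, ENNReal.mul_rpow_of_nonneg _ _ he1,
                  ← ENNReal.rpow_mul, e2', ENNReal.rpow_one]
      _ = C ^ e * K ^ e * ∫⁻ z in Set.Ioo (-r) r, hEn R f z := lintegral_const_mul _ (meas_hEn hf)
      _ ≤ C ^ e * K ^ e * X := by gcongr; exact int_hEn hr hr1 hf
      _ = _ := by
          have ht2 : 0 ≤ 1 / 2 * (1 - τ) := by positivity
          have hte : 0 ≤ τ * e := by positivity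
          have eτ : e * τ = qv * (1 - y) / 2 - qv * x / 2 := by
            rw [hee, hτ, hm]; linear_combination (qv * (1 - y) / 4) * hxq
          rw [hK, ENNReal.mul_rpow_of_nonneg _ _ he1, ← ENNReal.rpow_mul, ← ENNReal.rpow_mul,
            ← ENNReal.rpow_mul,
            show (1 / 2 : ℝ) * ((1 - τ) * e) = 1 / 2 * (1 - τ) * e by ring,
            ENNReal.mul_rpow_of_nonneg _ _ ht1, ENNReal.mul_rpow_of_nonneg _ _ ht1,
            ENNReal.mul_rpow_of_nonneg _ _ hte, ← ENNReal.rpow_mul,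
            show qv * ((1 - θ) / 2) = 1 / 2 * (1 - τ) * e by
              linear_combination (-qv / 2) * hθ + eτ / 2 - hee / 2,
            show qv * (θ / 2) = 1 / 2 * (1 - τ) * e + 2 * (τ * e) + 1 by
              linear_combination (qv / 2) * hθ - 3 / 2 * eτ - hee / 2 + hyq / 2,
            ENNReal.rpow_add_of_nonneg _ _ (by positivity) zero_le_one,
            ENNReal.rpow_add_of_nonneg _ _ ht1 (by positivity), ENNReal.rpow_one]
          ring

lemma enorm_rpow_real_le {x y : ℝ} (hx : 0 ≤ x) (hy : 0 ≤ y) : ‖x ^ y‖ₑ = ‖x‖ₑ ^ y := by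
  rw [Real.enorm_eq_ofReal (Real.rpow_nonneg hx y), Real.enorm_eq_ofReal hx,
    ENNReal.ofReal_rpow_of_nonneg hx hy]

lemma aniNorm_le {R r qv qh : ℝ} (hqh : 2 ≤ qh) (hqv : 2 ≤ qv) (f : E2 × ℝ → ℝ) :
    ‖aniNormR f R r qv qh‖ₑ ≤
      (∫⁻ z in Set.Ioo (-r) r, hInt R f qh z ^ (qv / qh)) ^ (1 / qv) := by
  have h1 : 0 ≤ 1 / qv := by positivity
  have h2 : 0 ≤ qv / qh := by positivity
  have hin : ∀ z, 0 ≤ ∫ x' in ball (0 : E2) R, |f (x', z)| ^ qh := fun z =>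
    integral_nonneg fun x => Real.rpow_nonneg (abs_nonneg _) _
  rw [aniNormR, enorm_rpow_real_le (integral_nonneg fun z => Real.rpow_nonneg (hin z) _) h1]
  gcongr
  refine (enorm_integral_le_lintegral_enorm _).trans ?_
  apply lintegral_mono
  intro z
  dsimp only
  rw [enorm_rpow_real_le (hin z) h2]
  gcongr
  refine (enorm_integral_le_lintegral_enorm _).trans ?_
  rw [hInt]
  apply lintegral_mono
  intro x
  dsimp only
  rw [enorm_rpow_real_le (abs_nonneg _) (by linarith),
    ← Real.norm_eq_abs, enorm_norm]

lemma aniNorm_core {R qv qh θ : ℝ} (hR : 0 < R) (hqh : 2 ≤ qh) (hqv : 2 ≤ qv)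
    (h0 : 0 ≤ θ) (h1 : θ ≤ 1) (hθ : θ + 2 / qh + 1 / qv = 3 / 2) :
    ∃ C : ℝ≥0∞, C ≠ ⊤ ∧ ∀ r : ℝ, 0 < r → r ≤ 1 → ∀ f : E2 × ℝ → ℝ, ContDiff ℝ 1 f →
      ‖aniNormR f R r qv qh‖ₑ ≤ C * cA R r f ^ ((1 - θ) / 2) * cX R r f ^ (θ / 2) := by
  obtain ⟨C, hC, H⟩ := core hR hqh hqv h0 h1 hθ
  have hq : 0 ≤ 1 / qv := by positivity
  have hq0 : qv ≠ 0 := by positivity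
  refine ⟨C ^ (1 / qv), by finiteness, fun r hr hr1 f hf => ?_⟩
  refine (aniNorm_le hqh hqv f).trans ?_
  refine (ENNReal.rpow_le_rpow (H r hr hr1 f hf) hq).trans (le_of_eq ?_)
  rw [ENNReal.mul_rpow_of_nonneg _ _ hq, ENNReal.mul_rpow_of_nonneg _ _ hq,
    ← ENNReal.rpow_mul, ← ENNReal.rpow_mul,
    show qv * ((1 - θ) / 2) * (1 / qv) = (1 - θ) / 2 by field_simp,
    show qv * (θ / 2) * (1 / qv) = θ / 2 by field_simp]

lemma ofReal_norm_sq {G : Type*} [SeminormedAddCommGroup G] (x : G) :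
    ENNReal.ofReal (‖x‖ ^ 2) = ‖x‖ₑ ^ 2 := by
  rw [ENNReal.ofReal_pow (norm_nonneg _), ofReal_norm]

lemma energy_eq (u : ℝ → E2 × ℝ → ℝ) (R r : ℝ) :
    energy u R r = (⨆ t ∈ Set.Ioo (-r ^ 2) (0 : ℝ), cA R r (u t)) +
      ∫⁻ s in Set.Ioo (-r ^ 2) (0 : ℝ), ∫⁻ y in (ball (0 : E2) R) ×ˢ Set.Ioo (-r) r,
        ‖fderiv ℝ (u s) y‖ₑ ^ 2 := by
  simp only [energy, cA, cylSet, ofReal_norm_sq, ← Real.norm_eq_abs]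

lemma cA_le_energy {u : ℝ → E2 × ℝ → ℝ} {R r t : ℝ} (ht : t ∈ Set.Ioo (-r ^ 2) (0 : ℝ)) :
    cA R r (u t) ≤ energy u R r := by
  rw [energy_eq]
  exact (le_iSup₂ (f := fun t (_ : t ∈ Set.Ioo (-r ^ 2) (0 : ℝ)) => cA R r (u t)) t ht).trans
    le_self_add

lemma cX_le_energy {u : ℝ → E2 × ℝ → ℝ} {R r : ℝ} (hr : 0 < r) (hu : ∀ s, ContDiff ℝ 1 (u s)) :
    ∫⁻ t in Set.Ioo (-r ^ 2) (0 : ℝ), cX R r (u t) ≤ energy u R r := by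
  rw [energy_eq]
  set S := ⨆ t ∈ Set.Ioo (-r ^ 2) (0 : ℝ), cA R r (u t) with hS
  calc ∫⁻ t in Set.Ioo (-r ^ 2) (0 : ℝ), cX R r (u t)
      ≤ ∫⁻ t in Set.Ioo (-r ^ 2) (0 : ℝ), ((∫⁻ y in (ball (0 : E2) R) ×ˢ Set.Ioo (-r) r,
        ‖fderiv ℝ (u t) y‖ₑ ^ 2) + ENNReal.ofReal (1 / r) ^ 2 * S) := by
        apply setLIntegral_mono' measurableSet_Ioo
        intro t ht
        rw [cX, lintegral_add_right _ (((meas_f (hu t)).pow_const 2).const_mul _),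
          lintegral_const_mul _ ((meas_f (hu t)).pow_const 2)]
        gcongr
        exact le_iSup₂ (f := fun t (_ : t ∈ Set.Ioo (-r ^ 2) (0 : ℝ)) => cA R r (u t)) t ht
    _ = _ := by
        rw [lintegral_add_right _ measurable_const, lintegral_const, add_comm]
        congr 1
        rw [Measure.restrict_apply_univ, Real.volume_Ioo, mul_right_comm,
          ← ENNReal.ofReal_pow (by positivity), ← ENNReal.ofReal_mul (by positivity),
          show (1 / r) ^ 2 * (0 - -r ^ 2) = 1 by field_simp; ring]
        simp

/-- Lemma 2.1: for `R ≥ 1/2`, `2 ≤ p ≤ ∞`, `2 ≤ q_h, q_v < ∞` with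
`2/p + 2/q_h + 1/q_v = 3/2`,
`‖u‖²_{L^p(−r_n²,0; L^{q_v}_v L^{q_h}_h(U_n(R)))} ≤ C E_n(R)`, with `C` independent of `n`. -/
theorem stmt7 (R : ℝ) (p : ℝ≥0∞) (qh qv : ℝ)
    (hR : 1 / 2 ≤ R) (hp : 2 ≤ p) (hqh : 2 ≤ qh) (hqv : 2 ≤ qv)
    (hexp : (2 / p).toReal + 2 / qh + 1 / qv = 3 / 2) :
    ∃ C : ℝ≥0∞, 0 < C ∧ C ≠ ⊤ ∧
      ∀ (n : ℕ) (u : ℝ → EuclideanSpace ℝ (Fin 2) × ℝ → ℝ),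
        Measurable (Function.uncurry u) → (∀ s : ℝ, ContDiff ℝ 1 (u s)) →
        energy u R ((2 : ℝ) ^ (-(n : ℝ))) ≠ ⊤ →
        (eLpNorm (fun t => aniNormR (u t) R ((2 : ℝ) ^ (-(n : ℝ))) qv qh) p
            (volume.restrict (Set.Ioo (-(((2 : ℝ) ^ (-(n : ℝ))) ^ 2)) 0))) ^ 2 ≤
          C * energy u R ((2 : ℝ) ^ (-(n : ℝ))) := by
  have hp0 : p ≠ 0 := fun h => by simp [h] at hp
  set θ := (2 / p).toReal with hθd
  have h0 : 0 ≤ θ := ENNReal.toReal_nonneg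
  have h2p : 2 / p ≤ 1 := ENNReal.div_le_of_le_mul (by simpa using hp)
  have h1 : θ ≤ 1 := by
    have := ENNReal.toReal_mono one_ne_top h2p
    rwa [ENNReal.toReal_one] at this
  obtain ⟨K, hK, H⟩ := aniNorm_core (R := R) (by linarith) hqh hqv h0 h1 hexp
  refine ⟨K ^ 2 + 1, by positivity, by finiteness, ?_⟩
  intro n u _ hu hE
  have hr : 0 < (2 : ℝ) ^ (-(n : ℝ)) := by positivity
  have hr1 : (2 : ℝ) ^ (-(n : ℝ)) ≤ 1 :=
    Real.rpow_le_one_of_one_le_of_nonpos one_le_two (by simp)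
  generalize (2 : ℝ) ^ (-(n : ℝ)) = r at hr hr1 hE ⊢
  have hcX := cX_le_energy (R := R) hr hu
  have hcA : ∀ t ∈ Set.Ioo (-r ^ 2) (0 : ℝ), cA R r (u t) ≤ energy u R r :=
    fun t ht => cA_le_energy ht
  set E := energy u R r with hEd
  have hpt : ∀ t ∈ Set.Ioo (-r ^ 2) (0 : ℝ), ‖aniNormR (u t) R r qv qh‖ₑ ≤
      K * E ^ ((1 - θ) / 2) * cX R r (u t) ^ (θ / 2) := by
    intro t ht
    refine (H r hr hr1 (u t) (hu t)).trans ?_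
    have : 0 ≤ (1 - θ) / 2 := by linarith
    gcongr
    exact hcA t ht
  have key : eLpNorm (fun t => aniNormR (u t) R r qv qh) p
      (volume.restrict (Set.Ioo (-(r ^ 2)) 0)) ≤ K * E ^ (1 / 2 : ℝ) := by
    by_cases hpt' : p = ⊤
    · subst hpt'
      have hθ0 : θ = 0 := by simp [hθd]
      rw [eLpNorm_exponent_top]
      apply eLpNormEssSup_le_of_ae_enorm_bound
      filter_upwards [ae_restrict_mem measurableSet_Ioo] with t ht
      simpa [hθ0] using hpt t ht
    · have hP : 0 < p.toReal := ENNReal.toReal_pos hp0 hpt'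
      have hθP : θ * p.toReal = 2 := by
        rw [hθd, ENNReal.toReal_div]
        field_simp
        simp
      rw [eLpNorm_eq_lintegral_rpow_enorm_toReal hp0 hpt']
      set P := p.toReal with hPd
      have hi : ∫⁻ t in Set.Ioo (-(r ^ 2)) 0, ‖aniNormR (u t) R r qv qh‖ₑ ^ P ≤
          (K * E ^ (1 / 2 : ℝ)) ^ P := by
        have hex : 0 ≤ (1 - θ) / 2 * P := mul_nonneg (by linarith) hP.le
        calc ∫⁻ t in Set.Ioo (-(r ^ 2)) 0, ‖aniNormR (u t) R r qv qh‖ₑ ^ P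
            ≤ ∫⁻ t in Set.Ioo (-(r ^ 2)) 0,
              K ^ P * E ^ ((1 - θ) / 2 * P) * cX R r (u t) := by
              apply setLIntegral_mono' measurableSet_Ioo
              intro t ht
              refine (ENNReal.rpow_le_rpow (hpt t ht) hP.le).trans (le_of_eq ?_)
              rw [ENNReal.mul_rpow_of_nonneg _ _ hP.le, ENNReal.mul_rpow_of_nonneg _ _ hP.le,
                ← ENNReal.rpow_mul, ← ENNReal.rpow_mul,
                show θ / 2 * P = 1 by linear_combination hθP / 2, ENNReal.rpow_one]
          _ = K ^ P * E ^ ((1 - θ) / 2 * P) * ∫⁻ t in Set.Ioo (-(r ^ 2)) 0, cX R r (u t) := by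
              rw [lintegral_const_mul']
              finiteness
          _ ≤ K ^ P * E ^ ((1 - θ) / 2 * P) * E := by gcongr
          _ = (K * E ^ (1 / 2 : ℝ)) ^ P := by
              rw [ENNReal.mul_rpow_of_nonneg _ _ hP.le, ← ENNReal.rpow_mul,
                show 1 / 2 * P = (1 - θ) / 2 * P + 1 by linear_combination hθP / 2,
                ENNReal.rpow_add_of_nonneg _ _ hex zero_le_one, ENNReal.rpow_one, mul_assoc]
      refine (ENNReal.rpow_le_rpow hi (by positivity)).trans (le_of_eq ?_)
      rw [← ENNReal.rpow_mul, mul_one_div_cancel hP.ne', ENNReal.rpow_one]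
  calc _ ≤ (K * E ^ (1 / 2 : ℝ)) ^ 2 := by gcongr
    _ = K ^ 2 * E := by
        rw [mul_pow, ← ENNReal.rpow_natCast (E ^ _), ← ENNReal.rpow_mul]
        norm_num
    _ ≤ (K ^ 2 + 1) * E := by gcongr; exact le_self_add
end
end
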